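/- arXiv:math/0409520 — 2 statements merged into one kernel-verified Lean document; each statement's English description precedes it below -/
import Mathlib

section
/- If (Λ₁,φ₁) and (Λ₂,φ₂) are invertible ℚ-lattices in ℝⁿ that are commensurable, then Λ₁ = Λ₂ and φ₁ = φ₂. Hence two invertible ℚ-lattices are commensurable if and only if they are equal. -/
set_option synthInstance.maxHeartbeats 1000000
set_option maxHeartbeats 1000000

/-- The subgroup `ℤⁿ ⊂ ℚⁿ` of integer vectors. -/
def intVecs (n : ℕ) : AddSubgroup (Fin n → ℚ) where
  carrier := {v | ∀ i, ∃ m : ℤ, v i = m}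
  add_mem' := by
    rintro a b ha hb i
    obtain ⟨p, hp⟩ := ha i
    obtain ⟨q, hq⟩ := hb i
    exact ⟨p + q, by simp [hp, hq]⟩
  zero_mem' := fun i => ⟨0, by simp⟩
  neg_mem' := by
    rintro a ha i
    obtain ⟨p, hp⟩ := ha i
    exact ⟨-p, by simp [hp]⟩

/-- A `ℚ`-lattice in `ℝⁿ`: a lattice `Λ ⊂ ℝⁿ` (the `ℤ`-span of an `ℝ`-basis) together with a
homomorphism `φ : ℚⁿ/ℤⁿ → ℚΛ/Λ` (encoded as a homomorphism into `ℝⁿ/Λ` landing in the image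
of the `ℚ`-span `ℚΛ` of `Λ`). -/
structure QLatticeN (n : ℕ) where
  L : AddSubgroup (Fin n → ℝ)
  exists_basis : ∃ b : Module.Basis (Fin n) ℝ (Fin n → ℝ), L = AddSubgroup.closure (Set.range ⇑b)
  phi : ((Fin n → ℚ) ⧸ intVecs n) →+ ((Fin n → ℝ) ⧸ L)
  phi_mem : ∀ x, phi x ∈ AddSubgroup.map (QuotientAddGroup.mk' L)
      (Submodule.span ℚ ((L : Set (Fin n → ℝ)))).toAddSubgroup

/-- Commensurability of `ℚ`-lattices: `ℚΛ₁ = ℚΛ₂` and `φ₁ = φ₂ mod Λ₁ + Λ₂`. -/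
def QLatComm {n : ℕ} (L₁ L₂ : QLatticeN n) : Prop :=
  Submodule.span ℚ ((L₁.L : Set (Fin n → ℝ))) = Submodule.span ℚ ((L₂.L : Set (Fin n → ℝ))) ∧
  ∀ v : (Fin n → ℚ) ⧸ intVecs n,
    QuotientAddGroup.map L₁.L (L₁.L ⊔ L₂.L) (AddMonoidHom.id _)
        (fun x hx => AddSubgroup.mem_comap.mpr (AddSubgroup.mem_sup_left hx)) (L₁.phi v) =
      QuotientAddGroup.map L₂.L (L₁.L ⊔ L₂.L) (AddMonoidHom.id _)
        (fun x hx => AddSubgroup.mem_comap.mpr (AddSubgroup.mem_sup_right hx)) (L₂.phi v)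

/-- A `ℚ`-lattice is invertible if `φ` is an isomorphism onto `ℚΛ/Λ`. -/
def QLatticeN.Invertible {n : ℕ} (L : QLatticeN n) : Prop :=
  Function.Injective L.phi ∧
  ∀ y ∈ AddSubgroup.map (QuotientAddGroup.mk' L.L)
      (Submodule.span ℚ ((L.L : Set (Fin n → ℝ)))).toAddSubgroup,
    ∃ x, L.phi x = y

/-!
Let `φ₁ : A → V/Λ₁` be injective with image containing `ℚΛ₁/Λ₁`, and let `φ₂ : A → V/Λ₂` agree
with it modulo `Λ₁ + Λ₂`. If `N ≠ 0` multiplies `Λ₁` into `Λ₂` and `l ∈ Λ₁`, then the class of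
`l/N` is killed by `N`, so it is `φ₁ a` with `N a = 0`. A lift `y` of `φ₂ a` then satisfies
`N y ∈ Λ₂` and `y - l/N ∈ Λ₁ + Λ₂`; multiplying by `N` gives `l ∈ Λ₂`. By symmetry `Λ₁ = Λ₂`, and
congruence modulo `Λ₁ + Λ₂ = Λ₁` becomes equality.
-/

section

variable {A V : Type*} [AddCommGroup A] [AddCommGroup V] {Λ₁ Λ₂ : AddSubgroup V}

/-- The relation `φ₁ = φ₂ mod Λ₁ + Λ₂` between homomorphisms `φᵢ : A → V/Λᵢ`: their compositions
with the projections `V/Λᵢ → V/(Λ₁ + Λ₂)` agree. -/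
def CongrModSup (φ₁ : A →+ V ⧸ Λ₁) (φ₂ : A →+ V ⧸ Λ₂) : Prop :=
  ∀ a, QuotientAddGroup.map Λ₁ (Λ₁ ⊔ Λ₂) (AddMonoidHom.id V)
      (fun _ hx => AddSubgroup.mem_sup_left hx) (φ₁ a) =
    QuotientAddGroup.map Λ₂ (Λ₁ ⊔ Λ₂) (AddMonoidHom.id V)
      (fun _ hx => AddSubgroup.mem_sup_right hx) (φ₂ a)

theorem congrModSup_iff_sub_mem {φ₁ : A →+ V ⧸ Λ₁} {φ₂ : A →+ V ⧸ Λ₂} :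
    CongrModSup φ₁ φ₂ ↔ ∀ a (x y : V), φ₁ a = x → φ₂ a = y → x - y ∈ Λ₁ ⊔ Λ₂ := by
  refine forall_congr' fun a => ⟨fun h x y hx hy => ?_, fun h => ?_⟩
  · rw [hx, hy] at h
    exact QuotientAddGroup.eq_iff_sub_mem.1 h
  · obtain ⟨x, hx⟩ := QuotientAddGroup.mk_surjective (φ₁ a)
    obtain ⟨y, hy⟩ := QuotientAddGroup.mk_surjective (φ₂ a)
    rw [← hx, ← hy]
    exact QuotientAddGroup.eq_iff_sub_mem.2 (h x y hx.symm hy.symm)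

theorem CongrModSup.symm {φ₁ : A →+ V ⧸ Λ₁} {φ₂ : A →+ V ⧸ Λ₂} (h : CongrModSup φ₁ φ₂) :
    CongrModSup φ₂ φ₁ := by
  rw [congrModSup_iff_sub_mem] at h ⊢
  intro a y x hy hx
  rw [sup_comm, sub_mem_comm_iff]
  exact h a x y hx hy

theorem congrModSup_iff_eq {Λ : AddSubgroup V} {φ ψ : A →+ V ⧸ Λ} :
    CongrModSup φ ψ ↔ φ = ψ := by
  refine ⟨fun h => AddMonoidHom.ext fun a => ?_, fun h _ => h ▸ rfl⟩
  obtain ⟨x, hx⟩ := QuotientAddGroup.mk_surjective (φ a)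
  obtain ⟨y, hy⟩ := QuotientAddGroup.mk_surjective (ψ a)
  have hxy : x - y ∈ Λ := by
    simpa only [sup_idem] using congrModSup_iff_sub_mem.1 h a x y hx.symm hy.symm
  rw [← hx, ← hy]
  exact QuotientAddGroup.eq_iff_sub_mem.2 hxy

theorem relIndex_nsmul_mem_of_mem_sup {x : V} (hx : x ∈ Λ₁ ⊔ Λ₂) : Λ₂.relIndex Λ₁ • x ∈ Λ₂ := by
  rw [← Λ₁.relIndex_sup_right Λ₂]
  exact (Λ₂.addSubgroupOf (Λ₁ ⊔ Λ₂)).nsmul_index_mem ⟨x, hx⟩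

variable [Module ℚ V]

theorem exists_zsmul_mem_of_mem_span_rat {Λ : AddSubgroup V} {x : V}
    (hx : x ∈ Submodule.span ℚ (Λ : Set V)) : ∃ m : ℤ, m ≠ 0 ∧ m • x ∈ Λ := by
  obtain ⟨m, hm⟩ := multiple_mem_span_of_mem_localization_span (nonZeroDivisors ℤ) ℚ _ x hx
  rw [← Λ.coe_toIntSubmodule, Submodule.span_eq] at hm
  exact ⟨m, nonZeroDivisors.coe_ne_zero m, hm⟩

theorem relIndex_ne_zero_of_fg_of_subset_span_rat (hfg : Λ₁.FG)
    (h : (Λ₁ : Set V) ⊆ Submodule.span ℚ (Λ₂ : Set V)) : Λ₂.relIndex Λ₁ ≠ 0 := by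
  have : AddGroup.FG Λ₁ := (AddGroup.fg_iff_addSubgroup_fg Λ₁).2 hfg
  have htorsion : IsAddTorsion (Λ₁ ⧸ Λ₂.addSubgroupOf Λ₁) := fun q => by
    obtain ⟨x, rfl⟩ := QuotientAddGroup.mk_surjective q
    obtain ⟨m, hm, hmx⟩ := exists_zsmul_mem_of_mem_span_rat (h x.2)
    exact isOfFinAddOrder_iff_zsmul_eq_zero.2 ⟨m, hm, (QuotientAddGroup.eq_zero_iff (m • x)).2 hmx⟩
  exact AddSubgroup.index_ne_zero_iff_finite.2 (AddCommGroup.finite_of_fg_isAddTorsion _ htorsion)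

/-- The subgroup `ℚΛ/Λ` of `V/Λ`, the intended image of the homomorphism of an invertible
`ℚ`-lattice. -/
def spanRatQuotient (Λ : AddSubgroup V) : AddSubgroup (V ⧸ Λ) :=
  (Submodule.span ℚ (Λ : Set V)).toAddSubgroup.map (QuotientAddGroup.mk' Λ)

theorem CongrModSup.le_of_injective {φ₁ : A →+ V ⧸ Λ₁} {φ₂ : A →+ V ⧸ Λ₂}
    (h : CongrModSup φ₁ φ₂) (hindex : Λ₂.relIndex Λ₁ ≠ 0) (hinj : Function.Injective φ₁)
    (hrange : spanRatQuotient Λ₁ ≤ φ₁.range) : Λ₁ ≤ Λ₂ := by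
  intro l hl
  set N := Λ₂.relIndex Λ₁
  obtain ⟨x, hx, hNx⟩ : ∃ x ∈ Submodule.span ℚ (Λ₁ : Set V), N • x = l := by
    refine ⟨(N : ℚ)⁻¹ • l, Submodule.smul_mem _ _ (Submodule.subset_span hl), ?_⟩
    rw [← Nat.cast_smul_eq_nsmul ℚ, smul_inv_smul₀ (Nat.cast_ne_zero.2 hindex)]
  obtain ⟨a, ha⟩ : ∃ a, φ₁ a = x := hrange ⟨x, hx, rfl⟩
  have hNa : N • a = 0 := by
    apply hinj
    rw [map_nsmul, ha, map_zero, ← QuotientAddGroup.mk_nsmul, hNx]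
    exact (QuotientAddGroup.eq_zero_iff l).2 hl
  obtain ⟨y, hy⟩ := QuotientAddGroup.mk_surjective (φ₂ a)
  have hNy : N • y ∈ Λ₂ := by
    rw [← QuotientAddGroup.eq_zero_iff, QuotientAddGroup.mk_nsmul, hy, ← map_nsmul, hNa, map_zero]
  have hNxy : N • (x - y) ∈ Λ₂ :=
    relIndex_nsmul_mem_of_mem_sup (congrModSup_iff_sub_mem.1 h a x y ha hy.symm)
  have hl_eq : l = N • (x - y) + N • y := by rw [← nsmul_add, sub_add_cancel, hNx]
  exact hl_eq ▸ add_mem hNxy hNy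

theorem stmt10_general (hfg₁ : Λ₁.FG) (hfg₂ : Λ₂.FG) {φ₁ : A →+ V ⧸ Λ₁} {φ₂ : A →+ V ⧸ Λ₂}
    (hinj₁ : Function.Injective φ₁) (hinj₂ : Function.Injective φ₂)
    (hrange₁ : spanRatQuotient Λ₁ ≤ φ₁.range) (hrange₂ : spanRatQuotient Λ₂ ≤ φ₂.range) :
    Submodule.span ℚ (Λ₁ : Set V) = Submodule.span ℚ (Λ₂ : Set V) ∧ CongrModSup φ₁ φ₂ ↔
      Λ₁ = Λ₂ ∧ φ₁ ≍ φ₂ := by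
  constructor
  · rintro ⟨hspan, hcongr⟩
    have hindex₁ : Λ₂.relIndex Λ₁ ≠ 0 :=
      relIndex_ne_zero_of_fg_of_subset_span_rat hfg₁ (hspan ▸ Submodule.subset_span)
    have hindex₂ : Λ₁.relIndex Λ₂ ≠ 0 :=
      relIndex_ne_zero_of_fg_of_subset_span_rat hfg₂ (hspan ▸ Submodule.subset_span)
    obtain rfl : Λ₁ = Λ₂ := le_antisymm (hcongr.le_of_injective hindex₁ hinj₁ hrange₁)
      (hcongr.symm.le_of_injective hindex₂ hinj₂ hrange₂)
    exact ⟨rfl, heq_of_eq (congrModSup_iff_eq.1 hcongr)⟩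
  · rintro ⟨rfl, hφ⟩
    exact ⟨rfl, congrModSup_iff_eq.2 (eq_of_heq hφ)⟩

end

attribute [ext] QLatticeN

theorem QLatticeN.fg {n : ℕ} (L : QLatticeN n) : L.L.FG := by
  obtain ⟨b, hb⟩ := L.exists_basis
  exact (AddSubgroup.fg_iff _).2 ⟨Set.range b, hb.symm, Set.finite_range b⟩

/-- commensurable invertible `ℚ`-lattices are equal; hence two invertible
`ℚ`-lattices are commensurable if and only if they are equal. -/
theorem stmt10 (n : ℕ) (L₁ L₂ : QLatticeN n)
    (h₁ : L₁.Invertible) (h₂ : L₂.Invertible) :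
    (QLatComm L₁ L₂ → L₁.L = L₂.L ∧ L₁ = L₂) ∧ (QLatComm L₁ L₂ ↔ L₁ = L₂) := by
  have key : QLatComm L₁ L₂ ↔ L₁ = L₂ :=
    (stmt10_general L₁.fg L₂.fg h₁.1 h₂.1 h₁.2 h₂.2).trans QLatticeN.ext_iff.symm
  exact ⟨fun h => ⟨congrArg QLatticeN.L (key.1 h), key.1 h⟩, key⟩
end

section
/- Let g ≥ 2. For n ≥ 0 let Wₙ be the set of admissible words (a₀,…,aₙ) of length n+1 in the alphabet F of 2g letters, a set of cardinality 2g(2g−1)ⁿ, and let Pₙ = ℤ^{Wₙ} be the free abelian group of ℤ-valued functions on Wₙ. For n ≥ 1 define δ : P_{n−1} → Pₙ by (δf)(a₀,…,aₙ) = f(a₀,…,a_{n−1}) − f(a₁,…,aₙ). Then the quotient Fₙ := Pₙ / δ(P_{n−1}) is a free abelian group, of rank 2g(2g−1)^{n−1}(2g−2) + 1 for every n ≥ 1, while F₀ := P₀ is free abelian of rank 2g. (These are the ranks of the filtration steps in the direct-limit description H¹(S_T) = colim Fₙ of the first cohomology of the mapping-torus solenoid of the Schottky subshift.) -/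
set_option synthInstance.maxHeartbeats 1000000
set_option maxHeartbeats 1000000

/-- The involution `i ↦ i + g mod 2g` on the alphabet of `2g` letters,
pairing each letter with its inverse. -/
def letterInv (g : ℕ) (x : Fin (2 * g)) : Fin (2 * g) :=
  ⟨((x : ℕ) + g) % (2 * g), Nat.mod_lt _ (Nat.lt_of_le_of_lt (Nat.zero_le _) x.isLt)⟩

/-- Admissible words `(a₀, …, aₙ)` of length `n+1`: no letter is immediately followed by its
inverse. -/
def Word (g n : ℕ) : Type :=
  {w : Fin (n + 1) → Fin (2 * g) // ∀ i : Fin n, w i.succ ≠ letterInv g (w i.castSucc)}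

/-- Drop the last letter of an admissible word. -/
def wordInit (g n : ℕ) (w : Word g (n + 1)) : Word g n :=
  ⟨fun i => w.1 i.castSucc, fun i => w.2 i.castSucc⟩

/-- Drop the first letter of an admissible word. -/
def wordTail (g n : ℕ) (w : Word g (n + 1)) : Word g n :=
  ⟨fun i => w.1 i.succ, fun i => w.2 i.succ⟩

/-- The map `δ : P_n → P_{n+1}`, `(δf)(a₀,…,a_{n+1}) = f(a₀,…,aₙ) − f(a₁,…,a_{n+1})`. -/
def deltaHom (g n : ℕ) : (Word g n → ℤ) →+ (Word g (n + 1) → ℤ) where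
  toFun f := fun w => f (wordInit g n w) - f (wordTail g n w)
  map_zero' := by funext w; simp
  map_add' := by intro a b; funext w; simp [Pi.add_apply]; ring

/-!
Admissible words of length `n + 2` are the edges of a directed graph whose vertices are the
admissible words of length `n + 1`, the edge `w` running from its initial to its final segment, and
`δ` is the simplicial coboundary of that graph. For a connected graph, `ker δ` consists of the
constants, and `im δ` is saturated: if `k` divides `δ f`, then `f` is constant modulo `k`, so
`f = f x + k h` and `δ f = k δ h`. Hence the cokernel is torsion-free, thus free, of rank
`|E| - |V| + 1`.

The graphs are connected because each one is the line digraph of its predecessor: passing to the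
line digraph preserves connectedness when every vertex has an incoming and an outgoing edge. The
graph on single letters is connected because any two letters have a common successor, there being
at least three letters.
-/

section Coboundary

variable {V E E' : Type*} {s t : E → V} {s' t' : E' → E}

/-- Weak connectedness of the directed multigraph with edge set `E`, vertex set `V`, source map `s`
and target map `t`: any two vertices are joined by a path that may traverse edges backwards. The
graph without vertices counts as connected. -/
def IsWeaklyConnected (s t : E → V) : Prop :=
  ∀ x y, Relation.EqvGen (fun x y => ∃ e, s e = x ∧ t e = y) x y

/-- The digraph `(s', t')`, whose vertices are the edges of `(s, t)`, contains the line digraph of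
`(s, t)`: every path `e, e'` of length two in `(s, t)` is an edge from `e` to `e'`. -/
def ContainsLineDigraph (s t : E → V) (s' t' : E' → E) : Prop :=
  ∀ ⦃e e'⦄, t e = s e' → ∃ p, s' p = e ∧ t' p = e'

theorem ContainsLineDigraph.surjective_source (h : ContainsLineDigraph s t s' t')
    (hs : Function.Surjective s) : Function.Surjective s' := fun e =>
  let ⟨_, he'⟩ := hs (t e)
  let ⟨p, hp, _⟩ := h he'.symm
  ⟨p, hp⟩

theorem ContainsLineDigraph.surjective_target (h : ContainsLineDigraph s t s' t')
    (ht : Function.Surjective t) : Function.Surjective t' := fun e' =>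
  let ⟨_, he⟩ := ht (s e')
  let ⟨p, _, hp⟩ := h he
  ⟨p, hp⟩

theorem IsWeaklyConnected.of_containsLineDigraph (hc : IsWeaklyConnected s t)
    (h : ContainsLineDigraph s t s' t') (hs : Function.Surjective s)
    (ht : Function.Surjective t) : IsWeaklyConnected s' t' := by
  set joined := Relation.EqvGen fun e e' => ∃ p, s' p = e ∧ t' p = e'
  have joined_of_target_eq {e e' : E} (hee' : t e = t e') : joined e e' := by
    obtain ⟨d, hd⟩ := hs (t e)
    exact (Relation.EqvGen.rel _ _ (h hd.symm)).trans _ _ _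
      (Relation.EqvGen.rel _ _ (h (hee'.symm.trans hd.symm))).symm
  have joined_of_eqvGen {x y : V} (hxy : Relation.EqvGen (fun x y => ∃ e, s e = x ∧ t e = y) x y) :
      ∀ e e', t e = x → t e' = y → joined e e' := by
    induction hxy with
    | rel x y hxy =>
      rintro e e' rfl rfl
      obtain ⟨a, hsa, hta⟩ := hxy
      exact (Relation.EqvGen.rel _ _ (h hsa.symm)).trans _ _ _ (joined_of_target_eq hta)
    | refl x => exact fun e e' he he' => joined_of_target_eq (he.trans he'.symm)
    | symm x y _ ih => exact fun e e' he he' => (ih e' e he' he).symm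
    | trans x y z _ _ ihxy ihyz =>
      intro e e' he he'
      obtain ⟨d, hd⟩ := ht y
      exact (ihxy e d he hd).trans _ _ _ (ihyz d e' hd he')
  exact fun e e' => joined_of_eqvGen (hc (t e) (t e')) e e' rfl rfl

theorem IsWeaklyConnected.apply_eq {α : Type*} (hc : IsWeaklyConnected s t) {f : V → α}
    (hf : ∀ e, f (s e) = f (t e)) (x y : V) : f x = f y := by
  refine (eq_equivalence.comap f).eqvGen_iff.1 ((hc x y).mono ?_)
  rintro _ _ ⟨e, rfl, rfl⟩
  exact hf e

theorem IsWeaklyConnected.dvd_sub {R : Type*} [CommRing R] (hc : IsWeaklyConnected s t) {k : R}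
    {f : V → R} (hf : ∀ e, k ∣ f (s e) - f (t e)) (x y : V) : k ∣ f x - f y := by
  simp only [← Ideal.mem_span_singleton, ← Ideal.Quotient.eq] at hf ⊢
  exact hc.apply_eq (f := fun v => Ideal.Quotient.mk _ (f v)) hf x y

/-- The coboundary from functions on the vertices to functions on the edges of the directed
multigraph with source map `s` and target map `t`, with the sign convention source minus target. -/
def coboundary (R : Type*) [Ring R] (s t : E → V) : (V → R) →ₗ[R] (E → R) :=
  LinearMap.funLeft R R s - LinearMap.funLeft R R t

theorem coboundary_apply (R : Type*) [Ring R] (f : V → R) (e : E) :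
    coboundary R s t f e = f (s e) - f (t e) :=
  rfl

theorem IsWeaklyConnected.ker_coboundary (R : Type*) [Ring R] (hc : IsWeaklyConnected s t) :
    LinearMap.ker (coboundary R s t) = Submodule.span R {1} := by
  ext f
  rw [Submodule.mem_span_singleton]
  constructor
  · intro hf
    have hconst := hc.apply_eq fun e => sub_eq_zero.1 (congrFun hf e)
    obtain _ | ⟨⟨x⟩⟩ := isEmpty_or_nonempty V
    · exact ⟨0, Subsingleton.elim _ _⟩
    · exact ⟨f x, funext fun y => (mul_one _).trans (hconst x y)⟩
  · rintro ⟨a, rfl⟩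
    exact funext fun e => sub_self _

section Domain

variable (R : Type*) [CommRing R] [IsDomain R]

theorem IsWeaklyConnected.mem_range_coboundary_of_smul_mem (hc : IsWeaklyConnected s t) {k : R}
    (hk : k ≠ 0) {c : E → R} (h : k • c ∈ LinearMap.range (coboundary R s t)) :
    c ∈ LinearMap.range (coboundary R s t) := by
  obtain _ | ⟨⟨x⟩⟩ := isEmpty_or_nonempty V
  · exact ⟨0, funext fun e => isEmptyElim (s e)⟩
  obtain ⟨f, hf⟩ := h
  have hfe (e : E) : f (s e) - f (t e) = k * c e := congrFun hf e
  choose q hq using fun y => hc.dvd_sub (fun e => ⟨c e, hfe e⟩) y x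
  refine ⟨q, funext fun e => mul_left_cancel₀ hk ?_⟩
  rw [coboundary_apply, mul_sub, ← hq, ← hq, sub_sub_sub_cancel_right, hfe]

theorem IsWeaklyConnected.isTorsionFree_quotient_range_coboundary (hc : IsWeaklyConnected s t) :
    Module.IsTorsionFree R ((E → R) ⧸ LinearMap.range (coboundary R s t)) := by
  rw [Module.isTorsionFree_iff_smul_eq_zero]
  intro k x hx
  obtain ⟨c, rfl⟩ := Submodule.Quotient.mk_surjective _ x
  rw [← Submodule.Quotient.mk_smul, Submodule.Quotient.mk_eq_zero] at hx
  rw [Submodule.Quotient.mk_eq_zero]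
  exact or_iff_not_imp_left.2 fun hk => hc.mem_range_coboundary_of_smul_mem R hk hx

variable [Finite V] [Nonempty V] [Finite E]

theorem IsWeaklyConnected.finrank_quotient_range_coboundary (hc : IsWeaklyConnected s t) :
    Module.finrank R ((E → R) ⧸ LinearMap.range (coboundary R s t)) + Nat.card V =
      Nat.card E + 1 := by
  have := Fintype.ofFinite V
  have := Fintype.ofFinite E
  have hker : Module.finrank R (LinearMap.ker (coboundary R s t)) = 1 := by
    rw [hc.ker_coboundary R,
      ← (LinearEquiv.toSpanNonzeroSingleton R (V → R) 1 one_ne_zero).finrank_eq,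
      Module.finrank_self]
  have hE := Submodule.finrank_quotient_add_finrank (LinearMap.range (coboundary R s t))
  have hV := Submodule.finrank_quotient_add_finrank (LinearMap.ker (coboundary R s t))
  rw [(coboundary R s t).quotKerEquivRange.finrank_eq, hker] at hV
  rw [Module.finrank_fintype_fun_eq_card, ← Nat.card_eq_fintype_card] at hE hV
  omega

theorem IsWeaklyConnected.nonempty_quotient_range_coboundary_linearEquiv [IsPrincipalIdealRing R]
    (hc : IsWeaklyConnected s t) {r : ℕ} (hr : r + Nat.card V = Nat.card E + 1) :
    Nonempty (((E → R) ⧸ LinearMap.range (coboundary R s t)) ≃ₗ[R] (Fin r → R)) := by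
  have := hc.isTorsionFree_quotient_range_coboundary R
  have := hc.finrank_quotient_range_coboundary R
  refine ⟨LinearEquiv.ofFinrankEq _ _ ?_⟩
  rw [Module.finrank_fin_fun]
  omega

end Domain

end Coboundary

theorem letterInv_involutive (g : ℕ) : Function.Involutive (letterInv g) := by
  intro x
  apply Fin.ext
  simp only [letterInv]
  rw [Nat.mod_add_mod, add_assoc, ← two_mul, Nat.add_mod_right, Nat.mod_eq_of_lt x.isLt]

namespace Word

variable {g n : ℕ}

instance : Finite (Word g n) := Subtype.finite

protected theorem ext {u v : Word g n} (h : ∀ i, u.1 i = v.1 i) : u = v :=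
  Subtype.ext (funext h)

/-- The admissible word `(a₀, …, aₙ, b)` obtained by appending the letter `b` to `(a₀, …, aₙ)`. -/
def snoc (w : Word g n) (b : Fin (2 * g)) (hb : b ≠ letterInv g (w.1 (Fin.last n))) :
    Word g (n + 1) :=
  ⟨Fin.snoc (α := fun _ => Fin (2 * g)) w.1 b, fun i => by
    cases i using Fin.lastCases with
    | last => rwa [Fin.succ_last, Fin.snoc_last, Fin.snoc_castSucc]
    | cast i => rw [Fin.succ_castSucc, Fin.snoc_castSucc, Fin.snoc_castSucc]; exact w.2 i⟩

theorem wordInit_snoc (w : Word g n) (b : Fin (2 * g)) (hb) :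
    wordInit g n (w.snoc b hb) = w :=
  Word.ext fun i => Fin.snoc_castSucc (α := fun _ => Fin (2 * g)) b w.1 i

theorem snoc_last (w : Word g n) (b : Fin (2 * g)) (hb) :
    (w.snoc b hb).1 (Fin.last (n + 1)) = b :=
  Fin.snoc_last (α := fun _ => Fin (2 * g)) b w.1

theorem ext_init_last {u v : Word g (n + 1)} (hinit : wordInit g n u = wordInit g n v)
    (hlast : u.1 (Fin.last (n + 1)) = v.1 (Fin.last (n + 1))) : u = v :=
  Word.ext <| Fin.lastCases hlast fun i => congrFun (congrArg Subtype.val hinit) i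

/-- The words of length one are the letters. -/
def equivLetter (g : ℕ) : Word g 0 ≃ Fin (2 * g) :=
  (Equiv.subtypeUnivEquiv fun _ i => i.elim0).trans (Equiv.funUnique (Fin 1) (Fin (2 * g)))

theorem last_ne_of_wordInit_eq {u : Word g (n + 1)} {w : Word g n} (h : wordInit g n u = w) :
    u.1 (Fin.last (n + 1)) ≠ letterInv g (w.1 (Fin.last n)) := by
  subst h
  exact u.2 (Fin.last n)

/-- The words extending `w` by one letter on the right correspond to the letters that may
follow `w`. -/
def extensionEquiv (w : Word g n) :
    {u : Word g (n + 1) // wordInit g n u = w} ≃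
      {b : Fin (2 * g) // b ≠ letterInv g (w.1 (Fin.last n))} where
  toFun u := ⟨u.1.1 (Fin.last (n + 1)), last_ne_of_wordInit_eq u.2⟩
  invFun b := ⟨w.snoc b.1 b.2, wordInit_snoc w b.1 b.2⟩
  left_inv u := Subtype.ext <|
    have hb := last_ne_of_wordInit_eq u.2
    ext_init_last ((wordInit_snoc w _ hb).trans u.2.symm) (snoc_last w _ hb)
  right_inv b := Subtype.ext (snoc_last w b.1 b.2)

theorem card_extensions (w : Word g n) :
    Nat.card {u : Word g (n + 1) // wordInit g n u = w} = 2 * g - 1 := by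
  rw [Nat.card_congr w.extensionEquiv, Nat.card_eq_fintype_card, Fintype.card_subtype_compl]
  simp

protected theorem card (g n : ℕ) : Nat.card (Word g n) = 2 * g * (2 * g - 1) ^ n := by
  induction n with
  | zero => rw [Nat.card_congr (equivLetter g), Nat.card_fin, pow_zero, mul_one]
  | succ n ih =>
    have := Fintype.ofFinite (Word g n)
    rw [← Nat.card_congr (Equiv.sigmaFiberEquiv (wordInit g n)), Nat.card_sigma]
    simp only [card_extensions, Finset.sum_const, Finset.card_univ, smul_eq_mul]
    rw [← Nat.card_eq_fintype_card, ih, pow_succ, mul_assoc]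

theorem exists_wordInit_eq_wordTail_eq {u v : Word g n}
    (hoverlap : ∀ i : Fin n, u.1 i.succ = v.1 i.castSucc)
    (hlast : v.1 (Fin.last n) ≠ letterInv g (u.1 (Fin.last n))) :
    ∃ w : Word g (n + 1), wordInit g n w = u ∧ wordTail g n w = v := by
  refine ⟨u.snoc _ hlast, wordInit_snoc .., Word.ext fun i => ?_⟩
  cases i using Fin.lastCases with
  | last => exact snoc_last u _ hlast
  | cast i =>
    exact (congrFun (congrArg Subtype.val (wordInit_snoc u _ hlast)) i.succ).trans (hoverlap i)

theorem containsLineDigraph (g n : ℕ) :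
    ContainsLineDigraph (wordInit g n) (wordTail g n)
      (wordInit g (n + 1)) (wordTail g (n + 1)) := by
  intro u v huv
  have hoverlap (i : Fin (n + 1)) : u.1 i.succ = v.1 i.castSucc :=
    congrFun (congrArg Subtype.val huv) i
  refine exists_wordInit_eq_wordTail_eq hoverlap ?_
  rw [← Fin.succ_last, hoverlap]
  exact v.2 (Fin.last n)

theorem exists_letter_ne_ne (hg : 2 ≤ g) (a b : Fin (2 * g)) : ∃ c, c ≠ a ∧ c ≠ b :=
  ENat.exists_ne_ne_of_three_le
    (by rw [ENat.card_eq_coe_fintype_card, Fintype.card_fin]; norm_cast; lia) a b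

theorem exists_edge_of_ne {x y : Word g 0} (h : y.1 0 ≠ letterInv g (x.1 0)) :
    ∃ w : Word g 1, wordInit g 0 w = x ∧ wordTail g 0 w = y :=
  exists_wordInit_eq_wordTail_eq (fun i => i.elim0) h

theorem wordInit_surjective (hg : 2 ≤ g) (n : ℕ) : Function.Surjective (wordInit g n) := by
  induction n with
  | zero =>
    intro x
    obtain ⟨c, hc, -⟩ := exists_letter_ne_ne hg (letterInv g (x.1 0)) (x.1 0)
    obtain ⟨w, hw, -⟩ := exists_edge_of_ne (y := (equivLetter g).symm c) hc
    exact ⟨w, hw⟩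
  | succ n ih => exact (containsLineDigraph g n).surjective_source ih

theorem wordTail_surjective (hg : 2 ≤ g) (n : ℕ) : Function.Surjective (wordTail g n) := by
  induction n with
  | zero =>
    intro y
    obtain ⟨c, hc, -⟩ := exists_letter_ne_ne hg (letterInv g (y.1 0)) (y.1 0)
    have hyc : y.1 0 ≠ letterInv g c := fun h => hc ((letterInv_involutive g).eq_iff.1 h.symm)
    obtain ⟨w, -, hw⟩ := exists_edge_of_ne (x := (equivLetter g).symm c) hyc
    exact ⟨w, hw⟩
  | succ n ih => exact (containsLineDigraph g n).surjective_target ih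

theorem isWeaklyConnected (hg : 2 ≤ g) (n : ℕ) :
    IsWeaklyConnected (wordInit g n) (wordTail g n) := by
  induction n with
  | zero =>
    intro x y
    obtain ⟨c, hxc, hyc⟩ := exists_letter_ne_ne hg (letterInv g (x.1 0)) (letterInv g (y.1 0))
    let z := (equivLetter g).symm c
    have hxz := exists_edge_of_ne (x := x) (y := z) hxc
    have hyz := exists_edge_of_ne (x := y) (y := z) hyc
    exact (Relation.EqvGen.rel x z hxz).trans _ _ _ (Relation.EqvGen.rel y z hyz).symm
  | succ n ih =>
    exact ih.of_containsLineDigraph (containsLineDigraph g n) (wordInit_surjective hg n)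
      (wordTail_surjective hg n)

protected theorem nonempty (hg : 2 ≤ g) (n : ℕ) : Nonempty (Word g n) := by
  have hpos : 0 < 2 * g - 1 := by lia
  have hcard : 0 < Nat.card (Word g n) := by rw [Word.card]; positivity
  exact (Nat.card_pos_iff.1 hcard).1

theorem card_succ (g n : ℕ) :
    Nat.card (Word g (n + 1)) = 2 * g * (2 * g - 1) ^ n * (2 * g - 2) + Nat.card (Word g n) := by
  rw [Word.card, Word.card]
  obtain rfl | hg := Nat.eq_zero_or_pos g
  · simp only [mul_zero, zero_mul, add_zero]
  · obtain ⟨q, hq⟩ : ∃ q, 2 * g = q + 2 := ⟨2 * g - 2, by lia⟩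
    rw [hq, Nat.add_sub_cancel, show q + 2 - 1 = q + 1 from rfl]
    ring

end Word

theorem stmt16_general (R : Type*) [CommRing R] [IsDomain R] [IsPrincipalIdealRing R] (g : ℕ)
    (hg : 2 ≤ g) :
    (∀ n : ℕ, Nat.card (Word g n) = 2 * g * (2 * g - 1) ^ n) ∧
    Nonempty ((Word g 0 → R) ≃ₗ[R] (Fin (2 * g) → R)) ∧
    (∀ m : ℕ,
      Nonempty (((Word g (m + 1) → R) ⧸
          LinearMap.range (coboundary R (wordInit g m) (wordTail g m))) ≃ₗ[R]
        (Fin (2 * g * (2 * g - 1) ^ m * (2 * g - 2) + 1) → R))) := by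
  refine ⟨Word.card g, ⟨LinearEquiv.funCongrLeft R R (Word.equivLetter g).symm⟩, fun m => ?_⟩
  have := Word.nonempty hg m
  exact (Word.isWeaklyConnected hg m).nonempty_quotient_range_coboundary_linearEquiv R
    (by rw [Word.card_succ]; ring)

/-- the number of admissible words of length `n+1` is `2g(2g−1)ⁿ`;
`F₀ = P₀` is free abelian of rank `2g`; and for `n ≥ 1` the quotient
`Fₙ = Pₙ/δ(P_{n−1})` is free abelian of rank `2g(2g−1)^{n−1}(2g−2) + 1`. -/
theorem stmt16 (g : ℕ) (hg : 2 ≤ g) :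
    (∀ n : ℕ, Nat.card (Word g n) = 2 * g * (2 * g - 1) ^ n) ∧
    Nonempty ((Word g 0 → ℤ) ≃+ (Fin (2 * g) → ℤ)) ∧
    (∀ m : ℕ,
      Nonempty (((Word g (m + 1) → ℤ) ⧸ (deltaHom g m).range) ≃+
        (Fin (2 * g * (2 * g - 1) ^ m * (2 * g - 2) + 1) → ℤ))) := by
  obtain ⟨hcard, hletters, hquotient⟩ := stmt16_general ℤ g hg
  exact ⟨hcard, hletters.map LinearEquiv.toAddEquiv,
    fun m => (hquotient m).map LinearEquiv.toAddEquiv⟩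
end
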